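/- Let G be a finite simple graph that is vertex-critical with respect to chromatic number (i.e., χ(G-v) < χ(G) for every vertex v). If χ(G) ≥ Δ(G) ≥ 6 and the clique number of the subgraph of G induced on vertices of degree at least χ(G) is at most ⌊Δ(G)/2⌋ - 2, then G is isomorphic to the complete graph K_{χ(G)}. -/

import Mathlib

open SimpleGraph

/-!
Write `χ(G) = n + 1` and split `n = r₁ + r₂`. Among the partitions `V = V₁ ∪ V₂` minimising the
Lovász potential that compares the number of edges inside the parts with `r₁` and `r₂`, take one
with as few components of `G[V₁]` and `G[V₂]` failing to be `rᵢ`-colourable as possible. By Brooks'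
theorem such an obstruction is an `(rᵢ + 1)`-clique (an odd cycle if `rᵢ = 2`), and moving one of
its vertices of degree at most `n` to the other part creates a new obstruction there. Since there
are finitely many partitions, moving such vertices back and forth returns to an earlier
obstruction, and this forces two cliques with `n + 1` vertices in total in which every vertex of
degree at most `n` is adjacent to all the others. The bound on cliques of high-degree vertices
provides many vertices of degree at most `n`, and a recolouring argument then shows that the union
is a clique. Being critical, `G` is that clique.
-/

namespace CriticalGraph

open Finset Function

variable {V α : Type*} {G : SimpleGraph V} {n : ℕ}

/-- `c` is a proper colouring of the subgraph induced on `s`; its values off `s` are irrelevant. -/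
def IsProperOn (G : SimpleGraph V) (c : V → α) (s : Finset V) : Prop :=
  ∀ ⦃u⦄, u ∈ s → ∀ ⦃v⦄, v ∈ s → G.Adj u v → c u ≠ c v

/-- `G[s]` is `n`-colourable. Colourings are total functions, so with `n = 0` this fails as soon
as `V` is nonempty, even for `s = ∅`. -/
def ColorableOn (G : SimpleGraph V) (s : Finset V) (n : ℕ) : Prop :=
  ∃ c : V → Fin n, IsProperOn G c s

/-- `G[s]` is vertex-critical with chromatic number `n + 1`. -/
def IsCriticalOn (G : SimpleGraph V) (s : Finset V) (n : ℕ) : Prop :=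
  Minimal (fun t ↦ ¬ ColorableOn G t n) s

open Classical in
/-- The number of neighbours of `v` in `s`, where `v` itself need not lie in `s`. -/
noncomputable def degreeIn (G : SimpleGraph V) (s : Finset V) (v : V) : ℕ :=
  #{u ∈ s | G.Adj v u}

/-- `s` is a union of connected components of `G[t]`. -/
structure IsClosedIn (G : SimpleGraph V) (s t : Finset V) : Prop where
  subset : s ⊆ t
  mem_of_adj : ∀ ⦃u⦄, u ∈ s → ∀ ⦃v⦄, v ∈ t → G.Adj u v → v ∈ s

/-- Connectedness of `G[t]`, in the form that `G[t]` has no proper nonempty union of components.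
The empty set counts as connected. -/
def IsConnectedOn (G : SimpleGraph V) (t : Finset V) : Prop :=
  ∀ ⦃s⦄, s.Nonempty → IsClosedIn G s t → s = t

theorem IsProperOn.mono {c : V → α} {s t : Finset V} (hc : IsProperOn G c t) (h : s ⊆ t) :
    IsProperOn G c s :=
  fun _ hu _ hv ↦ hc (h hu) (h hv)

theorem ColorableOn.mono {s t : Finset V} (h : ColorableOn G t n) (hst : s ⊆ t) :
    ColorableOn G s n :=
  h.imp fun _ hc ↦ hc.mono hst

theorem IsCriticalOn.colorableOn_of_ssubset {s t : Finset V} (h : IsCriticalOn G t n)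
    (hst : s ⊂ t) : ColorableOn G s n :=
  not_not.1 (h.not_prop_of_lt hst)

theorem exists_isCriticalOn_subset {s : Finset V} (h : ¬ ColorableOn G s n) :
    ∃ t ⊆ s, IsCriticalOn G t n :=
  exists_minimal_le_of_wellFoundedLT (fun t ↦ ¬ ColorableOn G t n) s h

theorem IsCriticalOn.nonempty {s : Finset V} (h : IsCriticalOn G s n) (hn : 0 < n) :
    s.Nonempty := by
  rw [nonempty_iff_ne_empty]
  rintro rfl
  exact h.prop ⟨fun _ ↦ ⟨0, hn⟩, fun u hu ↦ absurd hu (notMem_empty u)⟩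

/-! ### Degrees into a set -/

theorem degreeIn_mono {s t : Finset V} (h : s ⊆ t) (v : V) : degreeIn G s v ≤ degreeIn G t v := by
  classical exact card_le_card (filter_subset_filter _ h)

theorem degreeIn_lt_degreeIn {s t : Finset V} {v w : V} (h : s ⊆ t) (hwt : w ∈ t) (hws : w ∉ s)
    (hvw : G.Adj v w) : degreeIn G s v < degreeIn G t v := by
  classical
  exact card_lt_card <| (ssubset_iff_of_subset (filter_subset_filter _ h)).2
    ⟨w, mem_filter.2 ⟨hwt, hvw⟩, fun hw ↦ hws (mem_filter.1 hw).1⟩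

theorem degreeIn_univ [Fintype V] (v : V) [Fintype (G.neighborSet v)] :
    degreeIn G univ v = G.degree v := by
  rw [degreeIn, ← card_neighborFinset_eq_degree]
  congr 1
  ext u
  simp

theorem degreeIn_union_of_disjoint [DecidableEq V] {s t : Finset V} (h : Disjoint s t) (v : V) :
    degreeIn G (s ∪ t) v = degreeIn G s v + degreeIn G t v := by
  classical
  rw [degreeIn, filter_union, card_union_of_disjoint (disjoint_filter_filter h), degreeIn, degreeIn]

theorem degreeIn_insert_of_adj [DecidableEq V] {s : Finset V} {v w : V} (hw : w ∉ s)
    (h : G.Adj v w) : degreeIn G (insert w s) v = degreeIn G s v + 1 := by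
  classical
  rw [degreeIn, filter_insert, if_pos h, card_insert_of_notMem (by simp [hw]), degreeIn]

theorem degreeIn_insert_of_not_adj [DecidableEq V] (s : Finset V) {v w : V} (h : ¬ G.Adj v w) :
    degreeIn G (insert w s) v = degreeIn G s v := by
  classical
  rw [degreeIn, filter_insert, if_neg h, degreeIn]

theorem degreeIn_eq_erase_add_ite [DecidableEq V] [DecidableRel G.Adj] (t : Finset V)
    (v x : V) :
    degreeIn G t v = degreeIn G (t.erase x) v + if x ∈ t ∧ G.Adj v x then 1 else 0 := by
  by_cases hx : x ∈ t
  · conv_lhs => rw [← insert_erase hx]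
    by_cases hvx : G.Adj v x
    · rw [degreeIn_insert_of_adj (notMem_erase x t) hvx, if_pos ⟨hx, hvx⟩]
    · rw [degreeIn_insert_of_not_adj _ hvx, if_neg fun h ↦ hvx h.2, add_zero]
  · rw [erase_eq_of_notMem hx, if_neg fun h ↦ hx h.1, add_zero]

theorem degreeIn_erase_self [DecidableEq V] (s : Finset V) (v : V) :
    degreeIn G (s.erase v) v = degreeIn G s v := by
  classical simp [degreeIn_eq_erase_add_ite s v v]

theorem degreeIn_eq_card {s : Finset V} {v : V} (h : ∀ u ∈ s, G.Adj v u) :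
    degreeIn G s v = #s := by
  classical rw [degreeIn, filter_true_of_mem h]

theorem degreeIn_add_one_eq_card_of_isClique {s : Finset V} {v : V} (hs : G.IsClique s)
    (hv : v ∈ s) : degreeIn G s v + 1 = #s := by
  classical
  rw [← degreeIn_erase_self, degreeIn_eq_card fun u hu ↦
    hs hv (mem_of_mem_erase hu) (ne_of_mem_erase hu).symm, card_erase_add_one hv]

theorem exists_adj_ne_of_one_lt_degreeIn {s : Finset V} {v : V} (w : V)
    (h : 1 < degreeIn G s v) : ∃ u ∈ s, u ≠ w ∧ G.Adj v u := by
  classical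
  obtain ⟨u, hu, huw⟩ := exists_mem_ne h w
  exact ⟨u, (mem_filter.1 hu).1, huw, (mem_filter.1 hu).2⟩

/-! ### Extending colourings -/

theorem exists_forall_ne_of_card_lt (c : V → Fin n) {s : Finset V} (h : #s < n) :
    ∃ a, ∀ u ∈ s, c u ≠ a := by
  obtain ⟨a, -, ha⟩ : ∃ a ∈ univ, a ∉ s.image c :=
    exists_mem_notMem_of_card_lt_card (card_image_le.trans_lt (by simpa using h))
  exact ⟨a, fun u hu hua ↦ ha (mem_image.2 ⟨u, hu, hua⟩)⟩

theorem IsProperOn.update [DecidableEq V] {c : V → α} {s : Finset V} (hc : IsProperOn G c s)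
    {v : V} {a : α} (ha : ∀ u ∈ s, G.Adj v u → c u ≠ a) :
    IsProperOn G (update c v a) (insert v s) := by
  intro u hu w hw huw
  rcases eq_or_ne u v with rfl | huv
  · have hwu := huw.ne'
    simpa [hwu] using (ha w (mem_of_mem_insert_of_ne hw hwu) huw).symm
  rcases eq_or_ne w v with rfl | hwv
  · simpa [huv] using ha u (mem_of_mem_insert_of_ne hu huv) huw.symm
  · simpa [huv, hwv] using
      hc (mem_of_mem_insert_of_ne hu huv) (mem_of_mem_insert_of_ne hw hwv) huw

theorem IsProperOn.exists_update [DecidableEq V] {c : V → Fin n} {s : Finset V}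
    (hc : IsProperOn G c s) {v : V} (hv : degreeIn G s v < n) :
    ∃ a, IsProperOn G (Function.update c v a) (insert v s) := by
  classical
  obtain ⟨a, ha⟩ := exists_forall_ne_of_card_lt c hv
  exact ⟨a, hc.update fun u hu huv ↦ ha u (mem_filter.2 ⟨hu, huv⟩)⟩

theorem IsProperOn.exists_extend [DecidableEq V] {c : V → Fin n} {U S : Finset V}
    (hc : IsProperOn G c U)
    (hS : ∀ T ⊆ S, T.Nonempty → ∃ v ∈ T, degreeIn G (U ∪ T) v < n) :
    ∃ c' : V → Fin n, IsProperOn G c' (U ∪ S) ∧ ∀ u ∉ S, c' u = c u := by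
  induction S using Finset.strongInduction with
  | H S ih =>
    rcases S.eq_empty_or_nonempty with rfl | hne
    · exact ⟨c, by simpa using hc, fun _ _ ↦ rfl⟩
    obtain ⟨v, hv, hdeg⟩ := hS S Subset.rfl hne
    obtain ⟨c', hc', heq⟩ := ih (S.erase v) (erase_ssubset hv) fun T hT ↦
      hS T (hT.trans (erase_subset v S))
    obtain ⟨a, ha⟩ := hc'.exists_update (v := v)
      ((degreeIn_mono (union_subset_union_right (erase_subset v S)) v).trans_lt hdeg)
    refine ⟨_, by rwa [← union_insert, insert_erase hv] at ha, fun u hu ↦ ?_⟩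
    rw [update_of_ne (ne_of_mem_of_not_mem hv hu).symm, heq u (fun h ↦ hu (mem_of_mem_erase h))]

/- A vertex seeing two equally coloured vertices sees one colour fewer than its degree, so
uncolouring `x` leaves room for a greedy colouring of `S`, after which `x` can copy `y`. -/
theorem IsProperOn.colorableOn_union_of_eq [DecidableEq V] {c : V → Fin n} {U S : Finset V}
    (hc : IsProperOn G c U) {x y : V} (hx : x ∈ U) (hy : y ∈ U) (hxy : x ≠ y) (hcxy : c x = c y)
    (hUS : Disjoint U S) (hadj : ∀ v ∈ S, G.Adj v x ∧ G.Adj v y)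
    (hdeg : ∀ v ∈ S, degreeIn G (U ∪ S) v ≤ n) : ColorableOn G (U ∪ S) n := by
  have hxS : x ∉ S := disjoint_left.1 hUS hx
  obtain ⟨c', hc', heq⟩ := (hc.mono (erase_subset x U)).exists_extend (S := S) fun T hT ⟨v, hv⟩ ↦
    ⟨v, hv, (degreeIn_lt_degreeIn (union_subset_union (erase_subset x U) hT)
      (mem_union_left S hx) (by simpa using fun h ↦ hxS (hT h))
      (hadj v (hT hv)).1).trans_le (hdeg v (hT hv))⟩
  have hx_color : ∀ u ∈ U.erase x ∪ S, G.Adj x u → c' u ≠ c' x := by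
    intro u hu hxu
    rw [heq x hxS]
    rcases em (u ∈ S) with huS | huS
    · rw [hcxy, ← heq y (disjoint_left.1 hUS hy)]
      exact hc' hu (mem_union_left S (mem_erase.2 ⟨hxy.symm, hy⟩)) (hadj u huS).2
    · rw [heq u huS]
      exact hc (mem_of_mem_erase ((mem_union.1 hu).resolve_right huS)) hx hxu.symm
  have := hc'.update hx_color
  rw [update_eq_self, ← insert_union, insert_erase hx] at this
  exact ⟨c', this⟩

theorem IsProperOn.exists_apply_eq [DecidableEq V] {c : V → Fin n} {s : Finset V}
    (hc : IsProperOn G c s) {x y : V} (hxy : ¬ G.Adj x y)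
    (hdeg : degreeIn G s x + degreeIn G s y < n) :
    ∃ c' : V → Fin n, IsProperOn G c' (insert x (insert y s)) ∧ c' x = c' y := by
  classical
  obtain ⟨a, ha⟩ := exists_forall_ne_of_card_lt c
    (((card_union_le {u ∈ s | G.Adj x u} {u ∈ s | G.Adj y u}).trans_lt hdeg))
  simp only [mem_union, mem_filter] at ha
  have hy := hc.update (v := y) fun u hu hyu ↦ ha u (.inr ⟨hu, hyu⟩)
  refine ⟨_, hy.update (v := x) (a := a) fun u hu hxu ↦ ?_, ?_⟩
  · have huy : u ≠ y := by rintro rfl; exact hxy hxu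
    have hus := mem_of_mem_insert_of_ne hu huy
    rw [update_of_ne huy]
    exact ha u (.inl ⟨hus, hxu⟩)
  · rcases eq_or_ne y x with rfl | hyx <;> simp [*]

theorem IsProperOn.exists_apply_ne [DecidableEq V] {c : V → Fin n} {s : Finset V} {x y : V}
    (hc : IsProperOn G c (insert y s)) (hxy : x ≠ y) (hdeg : degreeIn G s x + 1 < n) :
    ∃ c' : V → Fin n, IsProperOn G c' (insert x (insert y s)) ∧ c' x ≠ c' y := by
  classical
  obtain ⟨a, ha⟩ := exists_forall_ne_of_card_lt c
    ((card_insert_le y {u ∈ s | G.Adj x u}).trans_lt hdeg)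
  simp only [mem_insert, mem_filter, forall_eq_or_imp] at ha
  refine ⟨Function.update c x a, hc.update fun u hu hxu ↦ ?_, by simpa [hxy.symm] using ha.1.symm⟩
  rcases mem_insert.1 hu with rfl | hus
  · exact ha.1
  · exact ha.2 u ⟨hus, hxu⟩

/-! ### Connectedness and gluing -/

theorem IsClosedIn.sdiff [DecidableEq V] {s t : Finset V} (h : IsClosedIn G s t) :
    IsClosedIn G (t \ s) t where
  subset := sdiff_subset
  mem_of_adj _ hu _ hv huv := mem_sdiff.2 ⟨hv, fun hvs ↦
    (mem_sdiff.1 hu).2 (h.mem_of_adj hvs (mem_sdiff.1 hu).1 huv.symm)⟩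

theorem IsConnectedOn.exists_adj {s t : Finset V} (ht : IsConnectedOn G t) (hs : s.Nonempty)
    (hst : s ⊂ t) : ∃ u ∈ s, ∃ v ∈ t, v ∉ s ∧ G.Adj u v := by
  by_contra! h
  exact hst.ne (ht hs ⟨hst.subset, fun _ hu _ hv huv ↦ by_contra fun hvs ↦ h _ hu _ hv hvs huv⟩)

theorem IsConnectedOn.subset_of_isClosedIn {C s t : Finset V} (hC : IsConnectedOn G C)
    (hs : IsClosedIn G s t) (hCt : C ⊆ t) {v : V} (hvC : v ∈ C) (hvs : v ∈ s) : C ⊆ s := by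
  classical
  refine inter_eq_left.1 (hC ⟨v, mem_inter.2 ⟨hvC, hvs⟩⟩ ⟨inter_subset_left, ?_⟩)
  exact fun u hu w hw huw ↦
    mem_inter.2 ⟨hw, hs.mem_of_adj (mem_inter.1 hu).2 (hCt hw) huw⟩

theorem IsConnectedOn.exists_induced_path {t : Finset V} (ht : IsConnectedOn G t)
    (hcl : ¬ G.IsClique t) :
    ∃ m ∈ t, ∃ x ∈ t, ∃ y ∈ t, G.Adj m x ∧ G.Adj m y ∧ x ≠ y ∧ ¬ G.Adj x y := by
  classical
  obtain ⟨x, hx, y, hy, hxy, hnadj⟩ : ∃ x ∈ t, ∃ y ∈ t, x ≠ y ∧ ¬ G.Adj x y := by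
    simpa [isClique_iff, Set.Pairwise] using hcl
  obtain ⟨m, hm, z, hz, hzS, hmz⟩ :=
    ht.exists_adj (s := insert x {u ∈ t | G.Adj x u}) (insert_nonempty _ _)
      ((ssubset_iff_of_subset (insert_subset hx (filter_subset _ _))).2
        ⟨y, hy, by simp [hxy.symm, hnadj]⟩)
  simp only [mem_insert, mem_filter, hz, true_and, not_or] at hm hzS
  rcases hm with rfl | ⟨hmt, hxm⟩
  · exact absurd hmz hzS.2
  · exact ⟨m, hmt, x, hx, z, hz, hxm.symm, hmz, Ne.symm hzS.1, hzS.2⟩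

theorem exists_perm_apply_eq [Finite α] {c₁ c₂ : V → α} {s : Finset V}
    (h : ∀ u ∈ s, ∀ v ∈ s, c₁ u = c₁ v ↔ c₂ u = c₂ v) :
    ∃ σ : Equiv.Perm α, ∀ u ∈ s, σ (c₁ u) = c₂ u := by
  classical
  have hex : ∀ a : {a // a ∈ c₁ '' s}, ∃ u ∈ s, c₁ u = a := fun a ↦ a.2
  choose pre hpre hpre_eq using hex
  let f : {a // a ∈ c₁ '' s} → {a // a ∈ c₂ '' s} := fun a ↦ ⟨c₂ (pre a), pre a, hpre a, rfl⟩
  have hf : Bijective f := by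
    refine ⟨fun a b hab ↦ Subtype.ext ?_, ?_⟩
    · rw [← hpre_eq a, ← hpre_eq b]
      exact (h _ (hpre a) _ (hpre b)).2 (congrArg Subtype.val hab)
    · rintro ⟨_, u, hu, rfl⟩
      exact ⟨⟨c₁ u, u, hu, rfl⟩, Subtype.ext ((h _ (hpre _) u hu).1 (hpre_eq _))⟩
  refine ⟨(Equiv.ofBijective f hf).extendSubtype, fun u hu ↦ ?_⟩
  rw [Equiv.extendSubtype_apply_of_mem _ _ ⟨u, hu, rfl⟩]
  exact (h _ (hpre _) u hu).1 (hpre_eq ⟨c₁ u, u, hu, rfl⟩)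

theorem colorableOn_of_separation [DecidableEq V] {S W X : Finset V} (hS : IsClosedIn G S (W \ X))
    {c₁ c₂ : V → Fin n} (h₁ : IsProperOn G c₁ (S ∪ X)) (h₂ : IsProperOn G c₂ (W \ S))
    (h : ∀ u ∈ X, ∀ v ∈ X, c₁ u = c₁ v ↔ c₂ u = c₂ v) : ColorableOn G W n := by
  obtain ⟨σ, hσ⟩ := exists_perm_apply_eq h
  have cross : ∀ u ∈ S, ∀ v ∈ W, v ∉ S → G.Adj u v → σ (c₁ u) ≠ c₂ v := by
    intro u hu v hv hvS huv
    have hvX : v ∈ X := by_contra fun hvX ↦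
      hvS (hS.mem_of_adj hu (mem_sdiff.2 ⟨hv, hvX⟩) huv)
    rw [← hσ v hvX]
    exact σ.injective.ne (h₁ (mem_union_left X hu) (mem_union_right S hvX) huv)
  refine ⟨fun v ↦ if v ∈ S then σ (c₁ v) else c₂ v, fun u hu v hv huv ↦ ?_⟩
  by_cases huS : u ∈ S <;> by_cases hvS : v ∈ S <;> simp only [huS, hvS, if_true, if_false]
  · exact σ.injective.ne (h₁ (mem_union_left X huS) (mem_union_left X hvS) huv)
  · exact cross u huS v hv hvS huv
  · exact (cross v hvS u hu huS huv.symm).symm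
  · exact h₂ (mem_sdiff.2 ⟨hu, huS⟩) (mem_sdiff.2 ⟨hv, hvS⟩) huv

/-! ### Critical sets and Brooks' theorem -/

theorem IsCriticalOn.le_degreeIn {W : Finset V} (hW : IsCriticalOn G W n) {v : V} (hv : v ∈ W) :
    n ≤ degreeIn G W v := by
  classical
  by_contra! hlt
  obtain ⟨c, hc⟩ := hW.colorableOn_of_ssubset (erase_ssubset hv)
  obtain ⟨a, ha⟩ := hc.exists_update ((degreeIn_mono (erase_subset v W) v).trans_lt hlt)
  rw [insert_erase hv] at ha
  exact hW.prop ⟨_, ha⟩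

theorem IsProperOn.injOn_of_isClique {c : V → α} {Q : Finset V} (hc : IsProperOn G c Q)
    (hQ : G.IsClique Q) : Set.InjOn c Q :=
  fun _ hu _ hv huv ↦ by_contra fun hne ↦ hc hu hv (hQ hu hv hne) huv

theorem IsCriticalOn.eq_of_isClique {Q W : Finset V} (hW : IsCriticalOn G W n) (hQW : Q ⊆ W)
    (hQ : G.IsClique Q) (hcard : n < #Q) : Q = W := by
  by_contra hne
  obtain ⟨c, hc⟩ := hW.colorableOn_of_ssubset (hQW.ssubset_of_ne hne)
  exact hcard.not_ge <| by
    simpa using card_le_card_of_injOn c (t := univ) (fun _ _ ↦ mem_univ _) (hc.injOn_of_isClique hQ)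

theorem IsCriticalOn.isConnectedOn_sdiff [DecidableEq V] {W X : Finset V}
    (hW : IsCriticalOn G W n) (hXW : X ⊆ W) (hX : G.IsClique X) : IsConnectedOn G (W \ X) := by
  intro S hSne hS
  by_contra hne
  obtain ⟨t, ht, htS⟩ := exists_of_ssubset (hS.subset.ssubset_of_ne hne)
  obtain ⟨htW, htX⟩ := mem_sdiff.1 ht
  obtain ⟨s, hs⟩ := hSne
  obtain ⟨c₁, h₁⟩ := hW.colorableOn_of_ssubset (s := S ∪ X) <|
    (ssubset_iff_of_subset (union_subset (hS.subset.trans sdiff_subset) hXW)).2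
      ⟨t, htW, by simp [htX, htS]⟩
  obtain ⟨c₂, h₂⟩ := hW.colorableOn_of_ssubset (s := W \ S) <|
    (ssubset_iff_of_subset sdiff_subset).2 ⟨s, (mem_sdiff.1 (hS.subset hs)).1, by simp [hs]⟩
  have hXS : X ⊆ W \ S := fun u hu ↦
    mem_sdiff.2 ⟨hXW hu, fun huS ↦ (mem_sdiff.1 (hS.subset huS)).2 hu⟩
  have inj₁ := (h₁.mono subset_union_right).injOn_of_isClique hX
  have inj₂ := (h₂.mono hXS).injOn_of_isClique hX
  exact hW.prop <| colorableOn_of_separation hS h₁ h₂ fun u hu v hv ↦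
    (inj₁.eq_iff hu hv).trans (inj₂.eq_iff hu hv).symm

theorem IsCriticalOn.isConnectedOn {W : Finset V} (hW : IsCriticalOn G W n) :
    IsConnectedOn G W := by
  classical simpa using hW.isConnectedOn_sdiff (empty_subset W) (by simp)

theorem IsCriticalOn.isConnectedOn_erase [DecidableEq V] {W : Finset V}
    (hW : IsCriticalOn G W n) {v : V} (hv : v ∈ W) : IsConnectedOn G (W.erase v) := by
  simpa [sdiff_singleton_eq_erase] using
    hW.isConnectedOn_sdiff (singleton_subset_iff.2 hv) (by simp)

theorem colorableOn_of_separation_pair [DecidableEq V] {S W : Finset V} {x y : V}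
    (hS : IsClosedIn G S (W \ {x, y})) {c₁ c₂ : V → Fin n}
    (h₁ : IsProperOn G c₁ (insert x (insert y S))) (h₂ : IsProperOn G c₂ (W \ S))
    (h : c₁ x = c₁ y ↔ c₂ x = c₂ y) : ColorableOn G W n := by
  refine colorableOn_of_separation hS (h₁.mono fun v ↦ ?_) h₂ ?_
  · simp only [mem_union, mem_insert, mem_singleton]
    tauto
  · simp [h, eq_comm (a := c₁ y), eq_comm (a := c₂ y)]

/- If one side forces `x` and `y` to be coloured alike, then each of them has at least `n - 1`
neighbours there, hence at most one on the other side, which can therefore also be coloured with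
`x` and `y` alike. -/
theorem colorableOn_of_isClosedIn_sdiff_pair [DecidableEq V] {S W : Finset V} {x y : V}
    (hn : 3 ≤ n) (hxy : x ≠ y) (hnadj : ¬ G.Adj x y)
    (hdegx : degreeIn G W x ≤ n) (hdegy : degreeIn G W y ≤ n)
    (hS : IsClosedIn G S (W \ {x, y})) {c₁ c₂ : V → Fin n}
    (h₁ : IsProperOn G c₁ (insert x (insert y S))) (h₁xy : c₁ x = c₁ y)
    (h₂ : IsProperOn G c₂ (W \ S)) (h₂xy : c₂ x ≠ c₂ y) : ColorableOn G W n := by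
  have hsplit (z : V) :
      degreeIn G S z + degreeIn G ((W \ {x, y}) \ S) z ≤ degreeIn G W z := by
    rw [← degreeIn_union_of_disjoint disjoint_sdiff, union_sdiff_of_subset hS.subset]
    exact degreeIn_mono sdiff_subset z
  by_cases hx_few : degreeIn G S x + 1 < n
  · obtain ⟨d, hd, hdxy⟩ := (h₁.mono (subset_insert x _)).exists_apply_ne hxy hx_few
    exact colorableOn_of_separation_pair hS hd h₂ (by simp [hdxy, h₂xy])
  by_cases hy_few : degreeIn G S y + 1 < n
  · obtain ⟨d, hd, hdyx⟩ := (h₁.mono (insert_subset_insert x (subset_insert y S))).exists_apply_ne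
      hxy.symm hy_few
    exact colorableOn_of_separation_pair hS (by rwa [insert_comm]) h₂
      (by simp [hdyx.symm, h₂xy])
  obtain ⟨d, hd, hdxy⟩ := (h₂.mono (s := (W \ {x, y}) \ S) (sdiff_subset_sdiff sdiff_subset
    Subset.rfl)).exists_apply_eq hnadj (by have := hsplit x; have := hsplit y; omega)
  refine colorableOn_of_separation_pair hS h₁ (hd.mono fun v ↦ ?_) (by simp [h₁xy, hdxy])
  simp only [mem_insert, mem_sdiff, mem_singleton]
  tauto

theorem IsCriticalOn.isConnectedOn_sdiff_pair [DecidableEq V] {W : Finset V} {x y : V}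
    (hW : IsCriticalOn G W n) (hn : 3 ≤ n) (hdeg : ∀ v ∈ W, degreeIn G W v ≤ n)
    (hx : x ∈ W) (hy : y ∈ W) (hxy : x ≠ y) (hnadj : ¬ G.Adj x y) :
    IsConnectedOn G (W \ {x, y}) := by
  intro S hSne hS
  by_contra hne
  obtain ⟨t, ht, htS⟩ := exists_of_ssubset (hS.subset.ssubset_of_ne hne)
  obtain ⟨htW, htxy⟩ := mem_sdiff.1 ht
  have hSxy {v : V} (hv : v ∈ S) : v ∈ W ∧ v ≠ x ∧ v ≠ y := by simpa using hS.subset hv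
  obtain ⟨s, hs⟩ := hSne
  obtain ⟨c₁, h₁⟩ := hW.colorableOn_of_ssubset (s := insert x (insert y S)) <|
    (ssubset_iff_of_subset (insert_subset hx (insert_subset hy fun v hv ↦ (hSxy hv).1))).2
      ⟨t, htW, by simpa [htS] using htxy⟩
  obtain ⟨c₂, h₂⟩ := hW.colorableOn_of_ssubset (s := W \ S) <|
    (ssubset_iff_of_subset sdiff_subset).2 ⟨s, (hSxy hs).1, by simp [hs]⟩
  have h₁' : IsProperOn G c₁ (W \ ((W \ {x, y}) \ S)) := h₁.mono fun v ↦ by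
    simp only [mem_insert, mem_sdiff, mem_singleton]; tauto
  have h₂' : IsProperOn G c₂ (insert x (insert y ((W \ {x, y}) \ S))) := h₂.mono fun v ↦ by
    simp only [mem_insert, mem_sdiff, mem_singleton]
    rintro (rfl | rfl | h)
    exacts [⟨hx, fun h ↦ (hSxy h).2.1 rfl⟩, ⟨hy, fun h ↦ (hSxy h).2.2 rfl⟩, ⟨h.1.1, h.2⟩]
  by_cases e₁ : c₁ x = c₁ y <;> by_cases e₂ : c₂ x = c₂ y
  · exact hW.prop (colorableOn_of_separation_pair hS h₁ h₂ (by simp [e₁, e₂]))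
  · exact hW.prop (colorableOn_of_isClosedIn_sdiff_pair hn hxy hnadj (hdeg x hx) (hdeg y hy)
      hS h₁ e₁ h₂ e₂)
  · exact hW.prop (colorableOn_of_isClosedIn_sdiff_pair hn hxy hnadj (hdeg x hx) (hdeg y hy)
      hS.sdiff h₂' e₂ h₁' e₁)
  · exact hW.prop (colorableOn_of_separation_pair hS h₁ h₂ (by simp [e₁, e₂]))

/- Brooks' theorem: `x` and `y` get the same colour, the rest of `W` is coloured greedily towards
their common neighbour `m`, and `m` comes last. -/
theorem IsCriticalOn.isClique_of_degreeIn_le {W : Finset V} (hW : IsCriticalOn G W n) (hn : 3 ≤ n)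
    (hdeg : ∀ v ∈ W, degreeIn G W v ≤ n) : G.IsClique W := by
  classical
  by_contra hcl
  obtain ⟨m, hm, x, hx, y, hy, hmx, hmy, hxy, hnadj⟩ := hW.isConnectedOn.exists_induced_path hcl
  have hconn := hW.isConnectedOn_sdiff_pair hn hdeg hx hy hxy hnadj
  have hmxy : m ∈ W \ {x, y} := by simp [hm, hmx.ne, hmy.ne]
  have hsplit : ({x, y} ∪ (W \ {x, y}).erase m) ∪ {m} = W := by
    rw [union_assoc, union_comm _ {m}, ← insert_eq, insert_erase hmxy,
      union_sdiff_of_subset (insert_subset hx (singleton_subset_iff.2 hy))]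
  have hconst : IsProperOn G (fun _ ↦ (⟨0, by omega⟩ : Fin n)) {x, y} := by
    intro u hu v hv huv
    simp only [mem_insert, mem_singleton] at hu hv
    rcases hu with rfl | rfl <;> rcases hv with rfl | rfl <;>
      simp_all [G.adj_comm]
  obtain ⟨c, hc, hceq⟩ := hconst.exists_extend (S := (W \ {x, y}).erase m) fun T hT hTne ↦ by
    have hTs : T ⊂ W \ {x, y} := hT.trans_ssubset (erase_ssubset hmxy)
    obtain ⟨v, hv, u, hu, huT, hvu⟩ := hconn.exists_adj hTne hTs
    obtain ⟨huW, huxy⟩ := mem_sdiff.1 hu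
    refine ⟨v, hv, (degreeIn_lt_degreeIn (union_subset ?_ (hTs.subset.trans sdiff_subset)) huW
      (by simpa [huT] using huxy) hvu).trans_le (hdeg v (mem_sdiff.1 (hTs.subset hv)).1)⟩
    exact insert_subset hx (singleton_subset_iff.2 hy)
  have hcxy : c x = c y := by rw [hceq x (by simp), hceq y (by simp)]
  refine hW.prop (hsplit ▸ hc.colorableOn_union_of_eq (S := {m}) (x := x) (y := y)
    (by simp) (by simp) hxy hcxy ?_ (by simp [hmx, hmy]) ?_)
  · simp [hmx.ne, hmy.ne]
  · simpa only [hsplit, mem_singleton, forall_eq] using hdeg m hm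

theorem IsCriticalOn.isClique_of_twins {W : Finset V} {x y : V}
    (hW : IsCriticalOn G W n) (hn : 2 ≤ n) (hdeg : ∀ v ∈ W, degreeIn G W v ≤ n) (hx : x ∈ W)
    (hy : y ∈ W) (hxy : G.Adj x y)
    (htwin : ∀ u ∈ W, u ≠ x → u ≠ y → (G.Adj u x ↔ G.Adj u y)) : G.IsClique W := by
  classical
  rcases hn.lt_or_eq with hn | rfl
  · exact hW.isClique_of_degreeIn_le hn hdeg
  obtain ⟨w, hw, hwy, hxw⟩ := exists_adj_ne_of_one_lt_degreeIn y (hW.le_degreeIn hx)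
  have hyw := ((htwin w hw hxw.ne' hwy).1 hxw.symm).symm
  have htri : G.IsNClique 3 {x, y, w} := is3Clique_triple_iff.2 ⟨hxy, hxw, hyw⟩
  rw [← hW.eq_of_isClique (by simp [insert_subset_iff, *]) htri.isClique (by simp [htri.card_eq])]
  exact htri.isClique

/-! ### Optimal two-part partitions -/

/-- The partition obtained from `s` by moving `x` to the other part. -/
def toggle [DecidableEq V] (s : V → Bool) (x : V) : V → Bool := update s x (!s x)

theorem toggle_self [DecidableEq V] (s : V → Bool) (x : V) : toggle s x x = !s x :=
  update_self ..

theorem toggle_of_ne [DecidableEq V] (s : V → Bool) {v x : V} (h : v ≠ x) :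
    toggle s x v = s v :=
  update_of_ne h ..

theorem toggle_toggle [DecidableEq V] (s : V → Bool) (x : V) : toggle (toggle s x) x = s := by
  simp [toggle]

section Partition

variable [Fintype V] {r : Bool → ℕ} {s : V → Bool} {i : Bool} {x : V} {A : Finset V}

/-- The part of index `i` in the two-part partition of the vertices encoded by `s`. -/
def side (s : V → Bool) (i : Bool) : Finset V := {v | s v = i}

/-- Lovász' potential `2 ∑ i, (e (side s i) - r i * #(side s i))`, where `e` counts edges. Up to a
constant depending on `r` only, it is minimised by partitions into parts of maximum degree
at most `r i`. -/
noncomputable def potential (G : SimpleGraph V) (r : Bool → ℕ) (s : V → Bool) : ℤ :=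
  ∑ v, ((degreeIn G (side s (s v)) v : ℤ) - 2 * r (s v))

/-- `s` minimises the potential among all two-part partitions. -/
def MinimizesPotential (G : SimpleGraph V) (r : Bool → ℕ) (s : V → Bool) : Prop :=
  ∀ t, potential G r s ≤ potential G r t

/-- `A` witnesses that part `i` of the partition `s` is not `r i`-colourable. -/
structure IsObstruction (G : SimpleGraph V) (r : Bool → ℕ) (s : V → Bool) (i : Bool)
    (A : Finset V) : Prop where
  subset : A ⊆ side s i
  critical : IsCriticalOn G A (r i)

/-- The obstructions in both parts of the partition `s`. -/
def obstructions (G : SimpleGraph V) (r : Bool → ℕ) (s : V → Bool) : Set (Finset V) :=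
  {A | ∃ i, IsObstruction G r s i A}

/-- `s` has the fewest obstructions among the partitions minimising the potential. -/
structure IsOptimal (G : SimpleGraph V) (r : Bool → ℕ) (s : V → Bool) : Prop where
  minimizes : MinimizesPotential G r s
  ncard_le : ∀ t, MinimizesPotential G r t →
    (obstructions G r s).ncard ≤ (obstructions G r t).ncard

@[simp] theorem mem_side {v : V} : v ∈ side s i ↔ s v = i := by simp [side]

theorem side_toggle_not [DecidableEq V] (s : V → Bool) (x : V) :
    side (toggle s x) (!s x) = insert x (side s (!s x)) := by
  ext v
  rcases eq_or_ne v x with rfl | hv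
  · simp [toggle_self]
  · simp [toggle_of_ne s hv, hv]

theorem erase_side_toggle [DecidableEq V] (s : V → Bool) (x : V) (i : Bool) :
    (side (toggle s x) i).erase x = (side s i).erase x := by
  ext v
  rcases eq_or_ne v x with rfl | hv
  · simp
  · simp [toggle_of_ne s hv, hv]

theorem degreeIn_side_add_degreeIn_side_not (s : V → Bool) (i : Bool) (v : V) :
    degreeIn G (side s i) v + degreeIn G (side s !i) v = degreeIn G univ v := by
  classical
  rw [← degreeIn_union_of_disjoint (disjoint_left.2 fun u hu hu' ↦ ?_)]
  · congr 1
    ext u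
    cases i <;> simp
  · rw [mem_side] at hu hu'
    simp [hu] at hu'

theorem add_apply_not (r : Bool → ℕ) (i : Bool) : r i + r (!i) = r true + r false := by
  cases i <;> simp [add_comm]

/- Every edge from `x` into its own part is counted at both of its ends. -/
theorem potential_eq [DecidableEq V] (r : Bool → ℕ) (s : V → Bool) (x : V) :
    potential G r s = 2 * ((degreeIn G (side s (s x)) x : ℤ) - r (s x)) +
      ∑ v ∈ univ.erase x, ((degreeIn G ((side s (s v)).erase x) v : ℤ) - 2 * r (s v)) := by
  classical
  have hcount : ∑ v ∈ univ.erase x, (if x ∈ side s (s v) ∧ G.Adj v x then 1 else 0 : ℤ) =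
      degreeIn G (side s (s x)) x := by
    rw [sum_boole, degreeIn]
    congr 2
    ext v
    simp only [mem_filter, mem_erase, mem_univ, mem_side, and_true]
    exact ⟨fun h ↦ ⟨h.2.1.symm, h.2.2.symm⟩, fun h ↦ ⟨h.2.ne', h.1.symm, h.2.symm⟩⟩
  have hterm (v : V) : (degreeIn G (side s (s v)) v : ℤ) - 2 * r (s v) =
      (degreeIn G ((side s (s v)).erase x) v - 2 * r (s v)) +
        if x ∈ side s (s v) ∧ G.Adj v x then 1 else 0 := by
    rw [degreeIn_eq_erase_add_ite (side s (s v)) v x]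
    push_cast
    ring
  rw [potential, ← add_sum_erase _ _ (mem_univ x), sum_congr rfl fun v _ ↦ hterm v,
    sum_add_distrib, hcount]
  ring

theorem potential_toggle_add [DecidableEq V] (r : Bool → ℕ) (s : V → Bool) (x : V) :
    potential G r (toggle s x) + 2 * ((degreeIn G (side s (s x)) x : ℤ) - r (s x)) =
      potential G r s + 2 * ((degreeIn G (side s !s x) x : ℤ) - r (!s x)) := by
  have hrest : ∑ v ∈ univ.erase x, ((degreeIn G ((side (toggle s x) (toggle s x v)).erase x) v : ℤ)
      - 2 * r (toggle s x v)) =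
      ∑ v ∈ univ.erase x, ((degreeIn G ((side s (s v)).erase x) v : ℤ) - 2 * r (s v)) :=
    sum_congr rfl fun v hv ↦ by rw [toggle_of_ne s (ne_of_mem_erase hv), erase_side_toggle]
  rw [potential_eq r (toggle s x) x, potential_eq r s x, hrest, toggle_self, side_toggle_not,
    degreeIn_insert_of_not_adj _ G.irrefl]
  ring

theorem exists_isOptimal (G : SimpleGraph V) (r : Bool → ℕ) : ∃ s, IsOptimal G r s := by
  obtain ⟨s₀, hs₀⟩ := Finite.exists_min (potential G r)
  obtain ⟨s, hs, hmin⟩ := Set.exists_min_image {s | MinimizesPotential G r s}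
    (fun s ↦ (obstructions G r s).ncard) (Set.toFinite _) ⟨s₀, hs₀⟩
  exact ⟨s, hs, hmin⟩

theorem exists_isObstruction (hG : ¬ ColorableOn G univ (r true + r false)) (s : V → Bool) :
    ∃ i A, IsObstruction G r s i A := by
  suffices ∃ i, ¬ ColorableOn G (side s i) (r i) by
    obtain ⟨i, hi⟩ := this
    obtain ⟨A, hA, hcrit⟩ := exists_isCriticalOn_subset hi
    exact ⟨i, A, hA, hcrit⟩
  by_contra! h
  obtain ⟨c, hc⟩ := h true
  obtain ⟨d, hd⟩ := h false
  refine hG ⟨fun v ↦ finSumFinEquiv (if s v then .inl (c v) else .inr (d v)),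
    fun u _ v _ huv heq ↦ ?_⟩
  have hsum := finSumFinEquiv.injective heq
  cases hu : s u <;> cases hv : s v <;>
    simp only [hu, hv, if_true, Bool.false_eq_true, if_false, reduceCtorEq, Sum.inl.injEq,
      Sum.inr.injEq] at hsum
  · exact hd (mem_side.2 hu) (mem_side.2 hv) huv hsum
  · exact hc (mem_side.2 hu) (mem_side.2 hv) huv hsum

/-- Moving `x` to the other part of `s` replaces the obstruction `A` in part `i` by the obstruction
`B` in part `!i`, and optimality is kept. -/
structure IsSwitch [DecidableEq V] (G : SimpleGraph V) (r : Bool → ℕ) (s : V → Bool) (i : Bool)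
    (x : V) (A B : Finset V) : Prop where
  optimal : IsOptimal G r s
  optimal_toggle : IsOptimal G r (toggle s x)
  obstruction : IsObstruction G r s i A
  obstruction_toggle : IsObstruction G r (toggle s x) (!i) B
  mem : x ∈ A
  mem_toggle : x ∈ B

theorem IsSwitch.symm [DecidableEq V] {B : Finset V} (h : IsSwitch G r s i x A B) :
    IsSwitch G r (toggle s x) (!i) x B A where
  optimal := h.optimal_toggle
  optimal_toggle := by simpa only [toggle_toggle] using h.optimal
  obstruction := h.obstruction_toggle
  obstruction_toggle := by simpa only [toggle_toggle, Bool.not_not] using h.obstruction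
  mem := h.mem_toggle
  mem_toggle := h.mem

theorem IsObstruction.of_toggle [DecidableEq V] (hA : IsObstruction G r (toggle s x) i A)
    (hx : x ∉ A) : IsObstruction G r s i A where
  subset v hv := by
    have hvx := ne_of_mem_of_not_mem hv hx
    simpa [toggle_of_ne s hvx] using hA.subset hv
  critical := hA.critical

section BoundedDegree

variable (hdeg : ∀ v, degreeIn G univ v ≤ r true + r false + 1)

include hdeg

theorem MinimizesPotential.degreeIn_side_le (hs : MinimizesPotential G r s) (v : V) :
    degreeIn G (side s (s v)) v ≤ r (s v) := by
  classical
  have := hs (toggle s v)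
  have := potential_toggle_add (G := G) r s v
  have := degreeIn_side_add_degreeIn_side_not (G := G) s (s v) v
  have := add_apply_not r (s v)
  have := hdeg v
  omega

namespace IsObstruction

theorem degreeIn_le (hA : IsObstruction G r s i A) (hs : MinimizesPotential G r s) {v : V}
    (hv : v ∈ A) : degreeIn G A v ≤ r i := by
  obtain rfl := mem_side.1 (hA.subset hv)
  exact (degreeIn_mono hA.subset v).trans (hs.degreeIn_side_le hdeg v)

theorem degreeIn_eq (hA : IsObstruction G r s i A) (hs : MinimizesPotential G r s) {v : V}
    (hv : v ∈ A) : degreeIn G A v = r i :=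
  (hA.degreeIn_le hdeg hs hv).antisymm (hA.critical.le_degreeIn hv)

theorem isClosedIn (hA : IsObstruction G r s i A) (hs : MinimizesPotential G r s) :
    IsClosedIn G A (side s i) where
  subset := hA.subset
  mem_of_adj u hu v hv huv := by
    by_contra hvA
    have hlt := degreeIn_lt_degreeIn hA.subset hv hvA huv
    rw [hA.degreeIn_eq hdeg hs hu, ← mem_side.1 (hA.subset hu)] at hlt
    exact hlt.not_ge (hs.degreeIn_side_le hdeg u)

theorem subset_of_mem {j : Bool} {B : Finset V} (hA : IsObstruction G r s i A)
    (hB : IsObstruction G r s j B) (hs : MinimizesPotential G r s) (hxA : x ∈ A) (hxB : x ∈ B) :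
    A ⊆ B := by
  obtain rfl : i = j := (mem_side.1 (hA.subset hxA)).symm.trans (mem_side.1 (hB.subset hxB))
  exact hA.critical.isConnectedOn.subset_of_isClosedIn (hB.isClosedIn hdeg hs) hA.subset hxA hxB

theorem eq_of_mem {j : Bool} {B : Finset V} (hA : IsObstruction G r s i A)
    (hB : IsObstruction G r s j B) (hs : MinimizesPotential G r s) (hxA : x ∈ A) (hxB : x ∈ B) :
    A = B :=
  (hA.subset_of_mem hdeg hB hs hxA hxB).antisymm (hB.subset_of_mem hdeg hA hs hxB hxA)

theorem minimizesPotential_toggle [DecidableEq V] (hA : IsObstruction G r s i A)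
    (hs : MinimizesPotential G r s) (hx : x ∈ A)
    (hlow : degreeIn G univ x ≤ r true + r false) : MinimizesPotential G r (toggle s x) := by
  intro t
  refine le_trans ?_ (hs t)
  obtain rfl := mem_side.1 (hA.subset hx)
  have := potential_toggle_add (G := G) r s x
  have := degreeIn_side_add_degreeIn_side_not (G := G) s (s x) x
  have := add_apply_not r (s x)
  have := hA.degreeIn_eq hdeg hs hx
  have := degreeIn_mono (G := G) hA.subset x
  omega

end IsObstruction

/- If no obstruction of the new partition contained `x`, then all of them would be obstructions of
`s` other than `A`, and there would be fewer of them. -/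
theorem IsOptimal.exists_isSwitch [DecidableEq V] (hs : IsOptimal G r s)
    (hA : IsObstruction G r s i A) (hx : x ∈ A) (hlow : degreeIn G univ x ≤ r true + r false) :
    ∃ B, IsSwitch G r s i x A B := by
  have hmin := hA.minimizesPotential_toggle hdeg hs.minimizes hx hlow
  have hold {B : Finset V} (hB : B ∈ obstructions G r (toggle s x)) (hxB : x ∉ B) :
      B ∈ obstructions G r s \ {A} := by
    obtain ⟨j, hB⟩ := hB
    exact ⟨⟨j, hB.of_toggle hxB⟩, fun h ↦ hxB (h ▸ hx)⟩
  have hAmem : A ∈ obstructions G r s := ⟨i, hA⟩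
  obtain ⟨B, ⟨j, hB⟩, hxB⟩ : ∃ B ∈ obstructions G r (toggle s x), x ∈ B := by
    by_contra! h
    exact (hs.ncard_le _ hmin).not_gt <| (Set.ncard_le_ncard fun B hB ↦ hold hB (h B hB)).trans_lt
      (Set.ncard_sdiff_singleton_lt_of_mem hAmem)
  have hsub : obstructions G r (toggle s x) ⊆ insert B (obstructions G r s \ {A}) := by
    rintro C ⟨k, hC⟩
    by_cases hxC : x ∈ C
    · exact .inl (hC.eq_of_mem hdeg hB hmin hxC hxB)
    · exact .inr (hold ⟨k, hC⟩ hxC)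
  have hle : (obstructions G r (toggle s x)).ncard ≤ (obstructions G r s).ncard :=
    calc _ ≤ _ := Set.ncard_le_ncard hsub
      _ ≤ (obstructions G r s \ {A}).ncard + 1 := Set.ncard_insert_le ..
      _ = _ := Set.ncard_sdiff_singleton_add_one hAmem
  have hj : (!i) = j := by
    rw [← mem_side.1 (hB.subset hxB), toggle_self, mem_side.1 (hA.subset hx)]
  exact ⟨B, hs, ⟨hmin, fun t ht ↦ hle.trans (hs.ncard_le t ht)⟩, hA, hj ▸ hB, hx, hxB⟩

theorem IsSwitch.isClosedIn_erase [DecidableEq V] {B : Finset V} (h : IsSwitch G r s i x A B) :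
    IsClosedIn G (B.erase x) (side s !i) := by
  have hB := h.obstruction_toggle.isClosedIn hdeg h.optimal_toggle.minimizes
  have hxi := mem_side.1 (h.obstruction.subset h.mem)
  refine ⟨fun v hv ↦ ?_, fun u hu v hv huv ↦ ?_⟩
  · have := erase_subset_erase x hB.subset hv
    rw [erase_side_toggle] at this
    exact mem_of_mem_erase this
  · have hvx : v ≠ x := by
      rintro rfl
      simp [hxi] at hv
    refine mem_erase.2 ⟨hvx, hB.mem_of_adj (mem_of_mem_erase hu) ?_ huv⟩
    simpa [toggle_of_ne s hvx] using hv

/- Both the obstruction created by moving `y`, deprived of `y`, and `B.erase z` are connected unions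
of components of `G[side s (!i)]` containing `w`, hence equal. -/
theorem IsObstruction.isSwitch_insert_erase [DecidableEq V] (hA : IsObstruction G r s i A)
    (hs : IsOptimal G r s) {y : V} (hy : y ∈ A) (hlow : degreeIn G univ y ≤ r true + r false)
    {B : Finset V} (hB : IsCriticalOn G B (r !i)) (hBdeg : ∀ v ∈ B, degreeIn G B v ≤ r !i)
    {z w : V} (hz : z ∈ B) (hclosed : IsClosedIn G (B.erase z) (side s !i)) (hw : w ∈ B.erase z)
    (hyw : G.Adj y w) :
    IsSwitch G r s i y A (insert y (B.erase z)) ∧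
      ∀ u ∈ B.erase z, G.Adj u z ↔ G.Adj u y := by
  obtain ⟨C, hC⟩ := hs.exists_isSwitch hdeg hA hy hlow
  have hC_closed := hC.isClosedIn_erase hdeg
  have hC_obs := hC.obstruction_toggle
  have hC_min := hC.optimal_toggle.minimizes
  have hwC : w ∈ C.erase y := by
    refine mem_erase.2 ⟨hyw.ne', (hC_obs.isClosedIn hdeg hC_min).mem_of_adj hC.mem_toggle ?_ hyw⟩
    simpa [toggle_of_ne s hyw.ne'] using hclosed.subset hw
  have heq : C.erase y = B.erase z :=
    ((hC_obs.critical.isConnectedOn_erase hC.mem_toggle).subset_of_isClosedIn hclosed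
      hC_closed.subset hwC hw).antisymm
    ((hB.isConnectedOn_erase hz).subset_of_isClosedIn hC_closed hclosed.subset hw hwC)
  refine ⟨by rwa [← heq, insert_erase hC.mem_toggle], fun u hu ↦ ?_⟩
  classical
  have hBu := (hBdeg u (mem_of_mem_erase hu)).antisymm (hB.le_degreeIn (mem_of_mem_erase hu))
  have hCu := hC_obs.degreeIn_eq hdeg hC_min (mem_of_mem_erase (heq ▸ hu))
  rw [degreeIn_eq_erase_add_ite B u z] at hBu
  rw [degreeIn_eq_erase_add_ite C u y, heq, ← hBu, Nat.add_left_cancel_iff] at hCu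
  by_cases huz : G.Adj u z <;> by_cases huy : G.Adj u y <;>
    simp_all [hC.mem_toggle]

theorem IsSwitch.exchange [DecidableEq V] {B : Finset V} (h : IsSwitch G r s i x A B) {y w : V}
    (hy : y ∈ A) (hlow : degreeIn G univ y ≤ r true + r false) (hw : w ∈ B.erase x)
    (hyw : G.Adj y w) :
    IsSwitch G r s i y A (insert y (B.erase x)) ∧
      ∀ u ∈ B.erase x, G.Adj u x ↔ G.Adj u y :=
  h.obstruction.isSwitch_insert_erase hdeg h.optimal hy hlow h.obstruction_toggle.critical
    (fun _ hv ↦ h.obstruction_toggle.degreeIn_le hdeg h.optimal_toggle.minimizes hv) h.mem_toggle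
    (h.isClosedIn_erase hdeg) hw hyw

end BoundedDegree

/-! ### The switching sequence -/

/-- Some two adjacent vertices of `A` have degree at most `n` in `G`. -/
def HasLowEdge (G : SimpleGraph V) (n : ℕ) (A : Finset V) : Prop :=
  ∃ x ∈ A, ∃ y ∈ A, G.Adj x y ∧ degreeIn G univ x ≤ n ∧ degreeIn G univ y ≤ n

/-- An optimal partition with an obstruction `A`, from which the vertex `x` is about to be moved
to the other part. -/
structure SwitchState (G : SimpleGraph V) (r : Bool → ℕ) where
  /-- The partition. -/
  s : V → Bool
  /-- The part containing the obstruction. -/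
  i : Bool
  /-- The obstruction. -/
  A : Finset V
  /-- The vertex to be moved. -/
  x : V
  optimal : IsOptimal G r s
  obstruction : IsObstruction G r s i A
  mem : x ∈ A
  low : degreeIn G univ x ≤ r true + r false
  exists_low_adj : ∃ y ∈ A, G.Adj x y ∧ degreeIn G univ y ≤ r true + r false

namespace SwitchState

theorem nonempty (hdeg : ∀ v, degreeIn G univ v ≤ r true + r false + 1)
    (hG : ¬ ColorableOn G univ (r true + r false))
    (hlow : ∀ i A, IsCriticalOn G A (r i) → (∀ v ∈ A, degreeIn G A v ≤ r i) →
      HasLowEdge G (r true + r false) A) : Nonempty (SwitchState G r) := by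
  obtain ⟨s, hs⟩ := exists_isOptimal G r
  obtain ⟨i, A, hA⟩ := exists_isObstruction hG s
  obtain ⟨x, hx, y, hy, hxy, hx_low, hy_low⟩ := hlow i A hA.critical fun v hv ↦
    hA.degreeIn_le hdeg hs.minimizes hv
  exact ⟨⟨s, i, A, x, hs, hA, hx, hx_low, y, hy, hxy, hy_low⟩⟩

variable [DecidableEq V]

/-- What is left of the obstruction after the move. -/
def rest (σ : SwitchState G r) : Finset V := σ.A.erase σ.x

/-- `τ` arises from `σ` by carrying out the move, and does not move the same vertex back. -/
structure Step (σ τ : SwitchState G r) : Prop where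
  isSwitch : IsSwitch G r σ.s σ.i σ.x σ.A τ.A
  s_eq : τ.s = toggle σ.s σ.x
  i_eq : τ.i = !σ.i
  x_ne : τ.x ≠ σ.x

variable {σ τ : SwitchState G r}

theorem isConnectedOn_rest (σ : SwitchState G r) : IsConnectedOn G σ.rest :=
  σ.obstruction.critical.isConnectedOn_erase σ.mem

theorem Step.subset_side {S : Finset V} {j : Bool} (h : Step σ τ) (hS : S ⊆ side σ.s j)
    (hx : σ.x ∉ S) : S ⊆ side τ.s j := by
  intro v hv
  rw [mem_side, h.s_eq, toggle_of_ne _ (ne_of_mem_of_not_mem hv hx), mem_side.1 (hS hv)]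

theorem exists_not_disjoint_rest (f : ℕ → SwitchState G r) :
    ∃ b, ∃ a < b, ¬ Disjoint (f b).A (f a).rest := by
  choose y hyA hxy _ using fun l ↦ (f l).exists_low_adj
  obtain ⟨a, b, hne, hab⟩ := Finite.exists_ne_map_eq_of_infinite y
  wlog hlt : a < b generalizing a b
  · exact this b a hne.symm hab.symm (by omega)
  exact ⟨b, a, hlt, not_disjoint_iff.2 ⟨y b, hyA b, mem_erase.2 ⟨hab ▸ (hxy a).ne', hab ▸ hyA a⟩⟩⟩

variable (hdeg : ∀ v, degreeIn G univ v ≤ r true + r false + 1)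

include hdeg

theorem exists_step
    (hlow : ∀ i A, IsCriticalOn G A (r i) → (∀ v ∈ A, degreeIn G A v ≤ r i) →
      HasLowEdge G (r true + r false) A) (σ : SwitchState G r) : ∃ τ, Step σ τ := by
  obtain ⟨B, hB⟩ := σ.optimal.exists_isSwitch hdeg σ.obstruction σ.mem σ.low
  have hB_obs := hB.obstruction_toggle
  obtain ⟨u, hu, v, hv, huv, hu_low, hv_low⟩ := hlow _ B hB_obs.critical fun v hv ↦
    hB_obs.degreeIn_le hdeg hB.optimal_toggle.minimizes hv
  rcases eq_or_ne u σ.x with hux | hux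
  · exact ⟨⟨_, _, B, v, hB.optimal_toggle, hB_obs, hv, hv_low, u, hu, huv.symm, hu_low⟩,
      hB, rfl, rfl, hux ▸ huv.ne'⟩
  · exact ⟨⟨_, _, B, u, hB.optimal_toggle, hB_obs, hu, hu_low, v, hv, huv, hv_low⟩,
      hB, rfl, rfl, hux⟩

theorem Step.isClosedIn_rest (h : Step σ τ) : IsClosedIn G σ.rest (side τ.s σ.i) := by
  simpa only [rest, Bool.not_not, ← h.s_eq] using h.isSwitch.symm.isClosedIn_erase hdeg

theorem Step.isClosedIn {S : Finset V} {j : Bool} (h : Step σ τ)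
    (hS : IsClosedIn G S (side σ.s j)) (hσ : Disjoint σ.A S) (hτ : Disjoint τ.A S) :
    IsClosedIn G S (side τ.s j) where
  subset := h.subset_side hS.subset (disjoint_left.1 hσ σ.mem)
  mem_of_adj u hu v hv huv := by
    have hu_side := h.subset_side hS.subset (disjoint_left.1 hσ σ.mem) hu
    rcases eq_or_ne v σ.x with rfl | hvx
    · have hτ_closed := τ.obstruction.isClosedIn hdeg τ.optimal.minimizes
      have hx := h.isSwitch.mem_toggle
      rw [← mem_side.1 (τ.obstruction.subset hx), mem_side.1 hv] at hτ_closed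
      exact absurd hu (disjoint_left.1 hτ (hτ_closed.mem_of_adj hx hu_side huv.symm))
    · rw [mem_side, h.s_eq, toggle_of_ne _ hvx] at hv
      exact hS.mem_of_adj hu (mem_side.2 hv) huv

section Sequence

variable {f : ℕ → SwitchState G r} (hf : ∀ l, Step (f l) (f (l + 1)))

include hf

theorem rest_subset_side {a b : ℕ} (hab : a < b)
    (hdisj : ∀ l, a < l → l < b → Disjoint (f l).A (f a).rest) :
    (f a).rest ⊆ side (f b).s (f a).i := by
  induction b, hab using Nat.le_induction with
  | base => exact ((hf a).isClosedIn_rest hdeg).subset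
  | succ l hl ih =>
    exact (hf l).subset_side (ih fun m ham hml ↦ hdisj m ham (Nat.lt_succ_of_lt hml))
      (disjoint_left.1 (hdisj l hl l.lt_succ_self) (f l).mem)

theorem isClosedIn_rest {a b : ℕ} (hab : a < b)
    (hdisj : ∀ l, a < l → l ≤ b → Disjoint (f l).A (f a).rest) :
    IsClosedIn G (f a).rest (side (f b).s (f a).i) := by
  induction b, hab using Nat.le_induction with
  | base => exact (hf a).isClosedIn_rest hdeg
  | succ l hl ih =>
    exact (hf l).isClosedIn hdeg (ih fun m ham hml ↦ hdisj m ham (Nat.le_succ_of_le hml))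
      (hdisj l hl l.le_succ) (hdisj _ (Nat.lt_succ_of_lt hl) le_rfl)

/- For the first `b` such that `(f b).A` meets some earlier `(f a).rest`, no component has been
disturbed in between. -/
theorem exists_recurrence : ∃ σ τ ρ : SwitchState G r, Step σ τ ∧ ρ.i = σ.i ∧ σ.rest ⊆ ρ.A ∧
    IsClosedIn G τ.rest (side ρ.s τ.i) := by
  classical
  have hex := exists_not_disjoint_rest f
  let b := Nat.find hex
  obtain ⟨a, hab, hmeet⟩ := Nat.find_spec hex
  have hdisj {l m : ℕ} (hlm : l < m) (hmb : m < b) : Disjoint (f m).A (f l).rest :=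
    by_contra fun h ↦ Nat.find_min hex hmb ⟨l, hlm, h⟩
  have hrest := rest_subset_side hdeg hf hab fun l ↦ hdisj
  obtain ⟨v, hvA, hv⟩ := not_disjoint_iff.1 hmeet
  have hi : (f b).i = (f a).i :=
    (mem_side.1 ((f b).obstruction.subset hvA)).symm.trans (mem_side.1 (hrest hv))
  have hsub : (f a).rest ⊆ (f b).A := (f a).isConnectedOn_rest.subset_of_isClosedIn
    ((f b).obstruction.isClosedIn hdeg (f b).optimal.minimizes) (hi ▸ hrest) hv hvA
  have hi_succ : (f (a + 1)).i ≠ (f b).i := by simp [(hf a).i_eq, hi]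
  have hab' : a + 1 < b := lt_of_le_of_ne hab fun h ↦ hi_succ (congrArg (fun l ↦ (f l).i) h)
  have hrest' := rest_subset_side hdeg hf hab' fun l ↦ hdisj
  refine ⟨f a, f (a + 1), f b, hf a, hi, hsub, isClosedIn_rest hdeg hf hab' fun l hal hlb ↦ ?_⟩
  rcases hlb.lt_or_eq with hlb | rfl
  · exact hdisj hal hlb
  · exact disjoint_left.2 fun u hu hu' ↦ hi_succ <|
      (mem_side.1 (hrest' hu')).symm.trans (mem_side.1 ((f b).obstruction.subset hu))

end Sequence

theorem exists_step_forall_adj_iff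
    (hlow : ∀ i A, IsCriticalOn G A (r i) → (∀ v ∈ A, degreeIn G A v ≤ r i) →
      HasLowEdge G (r true + r false) A) [Nonempty (SwitchState G r)] :
    ∃ σ τ : SwitchState G r, Step σ τ ∧
      ∀ y ∈ σ.A, G.Adj σ.x y → degreeIn G univ y ≤ r true + r false →
        ∀ u ∈ τ.rest, G.Adj u τ.x ↔ G.Adj u y := by
  obtain ⟨σ₀⟩ := ‹Nonempty (SwitchState G r)›
  choose next hnext using exists_step hdeg hlow
  obtain ⟨σ, τ, ρ, hστ, hi, hsub, hclosed⟩ := exists_recurrence hdeg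
    (f := fun l ↦ next^[l] σ₀) fun l ↦ by simpa only [iterate_succ_apply'] using hnext _
  refine ⟨σ, τ, hστ, fun y hy hxy hy_low ↦ ?_⟩
  have hτ := τ.obstruction
  rw [hστ.i_eq, ← hi] at hτ hclosed
  exact (ρ.obstruction.isSwitch_insert_erase hdeg ρ.optimal
    (hsub (mem_erase.2 ⟨hxy.ne', hy⟩)) hy_low hτ.critical
    (fun v hv ↦ hτ.degreeIn_le hdeg τ.optimal.minimizes hv) τ.mem hclosed
    (mem_erase.2 ⟨hστ.x_ne.symm, hστ.isSwitch.mem_toggle⟩) hxy.symm).2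

end SwitchState

/-! ### Pairs of cliques -/

/-- `A` and `C` are disjoint cliques with `n + 1` vertices in total, any two vertices of which are
adjacent unless both have degree more than `n` in `G`. -/
structure IsCliquePair (G : SimpleGraph V) (n : ℕ) (A C : Finset V) : Prop where
  disjoint : Disjoint A C
  card_add_card : #A + #C = n + 1
  isClique_left : G.IsClique A
  isClique_right : G.IsClique C
  adj : ∀ u ∈ A, ∀ v ∈ C, degreeIn G univ u ≤ n ∨ degreeIn G univ v ≤ n → G.Adj u v

namespace IsSwitch

variable [DecidableEq V] {B : Finset V} {y z : V}
  (hdeg : ∀ v, degreeIn G univ v ≤ r true + r false + 1)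

include hdeg

theorem isClique_insert_insert (h : IsSwitch G r s i x A B) (hr : ∀ i, 2 ≤ r i)
    (hy : y ∈ A) (hxy : G.Adj x y) (hy_low : degreeIn G univ y ≤ r true + r false)
    (hz : z ∈ B.erase x) (hz_low : degreeIn G univ z ≤ r true + r false)
    (hyz : ∀ u ∈ B.erase z, G.Adj u z ↔ G.Adj u y) :
    G.IsClique (insert z A : Finset V) ∧ G.IsClique (insert y B : Finset V) := by
  have hA := h.obstruction
  have hB := h.obstruction_toggle
  obtain ⟨hzx, hzB⟩ := mem_erase.1 hz
  obtain ⟨w, hw, hwx, hzw⟩ :=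
    exists_adj_ne_of_one_lt_degreeIn x ((hr _).trans (hB.critical.le_degreeIn hzB))
  have hwy := (hyz w (mem_erase.2 ⟨hzw.ne', hw⟩)).1 hzw.symm
  obtain ⟨h', hxy_B⟩ := h.exchange hdeg hy hy_low (mem_erase.2 ⟨hwx, hw⟩) hwy.symm
  have hxz := (hyz x (mem_erase.2 ⟨hzx.symm, h.mem_toggle⟩)).2 hxy
  have hzy := (hxy_B z hz).1 hxz.symm
  have hB_clique : G.IsClique B := hB.critical.isClique_of_twins (hr _)
    (fun v hv ↦ hB.degreeIn_le hdeg h.optimal_toggle.minimizes hv) h.mem_toggle hzB hxz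
    fun u hu hux huz ↦
      (hxy_B u (mem_erase.2 ⟨hux, hu⟩)).trans (hyz u (mem_erase.2 ⟨huz, hu⟩)).symm
  have hxz_A := (h.symm.exchange hdeg hzB hz_low (mem_erase.2 ⟨hxy.ne', hy⟩) hzy).2
  have hyz_A := (h'.symm.exchange hdeg (mem_insert_of_mem hz) hz_low
    (mem_erase.2 ⟨hxy.ne, h.mem⟩) hxz.symm).2
  have hA_clique : G.IsClique A := hA.critical.isClique_of_twins (hr _)
    (fun v hv ↦ hA.degreeIn_le hdeg h.optimal.minimizes hv) h.mem hy hxy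
    fun u hu hux huy ↦
      (hxz_A u (mem_erase.2 ⟨hux, hu⟩)).trans (hyz_A u (mem_erase.2 ⟨huy, hu⟩)).symm
  rw [coe_insert, coe_insert, isClique_insert, isClique_insert]
  refine ⟨⟨hA_clique, fun u hu _ ↦ ?_⟩, hB_clique, fun u hu _ ↦ ?_⟩ <;>
    rcases eq_or_ne u x with rfl | hux
  · exact hxz.symm
  · exact ((hxz_A u (mem_erase.2 ⟨hux, hu⟩)).1 (hA_clique hu h.mem hux)).symm
  · exact hxy.symm
  · exact ((hxy_B u (mem_erase.2 ⟨hux, hu⟩)).1 (hB_clique hu h.mem_toggle hux)).symm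

theorem isCliquePair (h : IsSwitch G r s i x A B) (hy : y ∈ A.erase x) (hz : z ∈ B.erase x)
    (hzA : G.IsClique (insert z A : Finset V)) (hyB : G.IsClique (insert y B : Finset V)) :
    IsCliquePair G (r true + r false) A (B.erase x) := by
  have hA := h.obstruction
  have hB := h.obstruction_toggle
  have hdisj : Disjoint A (B.erase x) := disjoint_left.2 fun v hvA hvB ↦ by
    have := mem_side.1 ((h.isClosedIn_erase hdeg).subset hvB)
    simp [mem_side.1 (hA.subset hvA)] at this
  have hA_clique : G.IsClique A := hzA.subset (by simp)
  have hB_clique : G.IsClique B := hyB.subset (by simp)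
  refine ⟨hdisj, ?_, hA_clique, hB_clique.subset (by simp), fun u hu v hv huv_low ↦ ?_⟩
  · have hA_card := degreeIn_add_one_eq_card_of_isClique hA_clique h.mem
    have hB_card := degreeIn_add_one_eq_card_of_isClique hB_clique h.mem_toggle
    rw [hA.degreeIn_eq hdeg h.optimal.minimizes h.mem] at hA_card
    rw [hB.degreeIn_eq hdeg h.optimal_toggle.minimizes h.mem_toggle] at hB_card
    rw [card_erase_of_mem h.mem_toggle, ← add_apply_not r i]
    omega
  obtain ⟨hvx, hvB⟩ := mem_erase.1 hv
  rcases eq_or_ne u x with rfl | hux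
  · exact hB_clique h.mem_toggle hvB hvx.symm
  rcases huv_low with hu_low | hv_low
  · have huz : G.Adj u z := hzA (by simp [hu]) (by simp) (disjoint_iff_ne.1 hdisj u hu z hz)
    exact (((h.exchange hdeg hu hu_low hz huz).2 v hv).1 (hB_clique hvB h.mem_toggle hvx)).symm
  · have hvy : G.Adj v y := hyB (by simp [hvB]) (by simp)
      (disjoint_iff_ne.1 hdisj y (mem_of_mem_erase hy) v hv).symm
    exact ((h.symm.exchange hdeg hvB hv_low hy hvy).2 u (mem_erase.2 ⟨hux, hu⟩)).1
      (hA_clique hu h.mem hux)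

end IsSwitch

theorem exists_isCliquePair (hdeg : ∀ v, degreeIn G univ v ≤ r true + r false + 1)
    (hr : ∀ i, 2 ≤ r i) (hG : ¬ ColorableOn G univ (r true + r false))
    (hlow : ∀ i A, IsCriticalOn G A (r i) → (∀ v ∈ A, degreeIn G A v ≤ r i) →
      HasLowEdge G (r true + r false) A) : ∃ A C, IsCliquePair G (r true + r false) A C := by
  classical
  have := SwitchState.nonempty hdeg hG hlow
  obtain ⟨σ, τ, hστ, hrest⟩ := SwitchState.exists_step_forall_adj_iff hdeg hlow
  obtain ⟨y, hy, hxy, hy_low⟩ := σ.exists_low_adj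
  have hz := mem_erase.2 ⟨hστ.x_ne, τ.mem⟩
  obtain ⟨hzA, hyB⟩ := hστ.isSwitch.isClique_insert_insert hdeg hr hy hxy hy_low hz τ.low
    (hrest y hy hxy hy_low)
  exact ⟨_, _, hστ.isSwitch.isCliquePair hdeg (mem_erase.2 ⟨hxy.ne', hy⟩) hz hzA hyB⟩

end Partition

/-! ### Cliques of high-degree vertices -/

section LowPart

variable [Fintype V] {w : ℕ} {A C : Finset V}

/-- The vertices of `A` having degree at most `n` in `G`. -/
noncomputable def lowPart (G : SimpleGraph V) (n : ℕ) (A : Finset V) : Finset V :=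
  {v ∈ A | degreeIn G univ v ≤ n}

/-- The vertices having degree more than `n` in `G` induce a subgraph of clique number
at most `w`. -/
def HighCliqueBound (G : SimpleGraph V) (n w : ℕ) : Prop :=
  ∀ S : Finset V, G.IsClique S → (∀ v ∈ S, n < degreeIn G univ v) → #S ≤ w

theorem mem_lowPart {v : V} : v ∈ lowPart G n A ↔ v ∈ A ∧ degreeIn G univ v ≤ n := mem_filter

theorem HighCliqueBound.card_le_card_lowPart_add (h : HighCliqueBound G n w) (hA : G.IsClique A) :
    #A ≤ #(lowPart G n A) + w := by
  rw [← card_filter_add_card_filter_not (s := A) (degreeIn G univ · ≤ n)]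
  refine Nat.add_le_add_left (h _ (hA.subset ?_) fun v hv ↦ ?_) _
  · exact_mod_cast filter_subset ..
  · simpa using (mem_filter.1 hv).2

theorem HighCliqueBound.hasLowEdge {m : ℕ} (h : HighCliqueBound G n w) (hA : IsCriticalOn G A m)
    (hm : 2 ≤ m) (hdeg : ∀ v ∈ A, degreeIn G A v ≤ m) (hw : w < m) : HasLowEdge G n A := by
  classical
  rcases hm.lt_or_eq with hm | rfl
  · have hclique := hA.isClique_of_degreeIn_le hm hdeg
    obtain ⟨v, hv⟩ := hA.nonempty (by omega)
    have := degreeIn_add_one_eq_card_of_isClique hclique hv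
    have := hA.le_degreeIn hv
    have := h.card_le_card_lowPart_add hclique
    obtain ⟨x, hx, y, hy, hxy⟩ := one_lt_card.1 (show 1 < #(lowPart G n A) by omega)
    rw [mem_lowPart] at hx hy
    exact ⟨x, hx.1, y, hy.1, hclique hx.1 hy.1 hxy, hx.2, hy.2⟩
  · by_contra hno
    refine hA.prop ⟨fun v ↦ if degreeIn G univ v ≤ n then 0 else 1, fun u hu v hv huv heq ↦ ?_⟩
    by_cases hu_low : degreeIn G univ u ≤ n <;> by_cases hv_low : degreeIn G univ v ≤ n <;>
      simp only [hu_low, hv_low, if_true, if_false, zero_ne_one, one_ne_zero] at heq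
    · exact hno ⟨u, hu, v, hv, huv, hu_low, hv_low⟩
    · have hcard := h {u, v} (by simpa [isClique_pair] using fun _ ↦ huv)
        (by simp [not_le.1 hu_low, not_le.1 hv_low])
      rw [card_pair huv.ne] at hcard
      omega

theorem degreeIn_compl_add [DecidableEq V] (s : Finset V) (v : V) :
    degreeIn G sᶜ v + degreeIn G s v = degreeIn G univ v := by
  rw [← degreeIn_union_of_disjoint disjoint_compl_left, union_comm, union_compl]

namespace IsCliquePair

theorem symm (h : IsCliquePair G n A C) : IsCliquePair G n C A where
  disjoint := h.disjoint.symm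
  card_add_card := by rw [add_comm, h.card_add_card]
  isClique_left := h.isClique_right
  isClique_right := h.isClique_left
  adj u hu v hv huv := (h.adj v hv u hu huv.symm).symm

variable [DecidableEq V] {x y : V} (h : IsCliquePair G n A C)

include h

theorem adj_of_mem_lowPart (hx : x ∈ lowPart G n (A ∪ C)) (hy : y ∈ A ∪ C) (hxy : x ≠ y) :
    G.Adj x y := by
  obtain ⟨hx, hx_low⟩ := mem_lowPart.1 hx
  rcases mem_union.1 hx with hx | hx <;> rcases mem_union.1 hy with hy | hy
  · exact h.isClique_left hx hy hxy
  · exact h.adj x hx y hy (.inl hx_low)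
  · exact h.symm.adj x hx y hy (.inl hx_low)
  · exact h.isClique_right hx hy hxy

theorem four_le_card_lowPart (hbound : HighCliqueBound G n w) (hw : 2 * w + 3 ≤ n) :
    4 ≤ #(lowPart G n (A ∪ C)) := by
  have hA := hbound.card_le_card_lowPart_add h.isClique_left
  have hC := hbound.card_le_card_lowPart_add h.isClique_right
  have := h.card_add_card
  rw [lowPart, filter_union, card_union_of_disjoint (disjoint_filter_filter h.disjoint)]
  change 4 ≤ #(lowPart G n A) + #(lowPart G n C)
  omega

variable (hdeg : ∀ v, degreeIn G univ v ≤ n + 1) (hbound : HighCliqueBound G n w)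

include hdeg hbound

theorem degreeIn_compl_le (hx : x ∈ A) : degreeIn G (A ∪ C)ᶜ x ≤ w + 1 := by
  have hC : #(lowPart G n C) ≤ degreeIn G C x := by
    rw [← degreeIn_eq_card fun v hv ↦ h.adj x hx v (mem_lowPart.1 hv).1 (.inr (mem_lowPart.1 hv).2)]
    exact degreeIn_mono (filter_subset ..) x
  have := degreeIn_compl_add (G := G) (A ∪ C) x
  have := degreeIn_union_of_disjoint (G := G) h.disjoint x
  have := degreeIn_add_one_eq_card_of_isClique h.isClique_left hx
  have := hbound.card_le_card_lowPart_add h.isClique_right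
  have := h.card_add_card
  have := hdeg x
  omega

omit [DecidableEq V] in
/- If `x` and `y` were not adjacent, one could colour the complement of `A ∪ C`, give `x` and `y` a
common colour, and then colour greedily, with the low vertices last. -/
theorem adj_of_isCriticalOn (hG : IsCriticalOn G univ n) (hw : 2 * w + 3 ≤ n) (hx : x ∈ A)
    (hy : y ∈ C) : G.Adj x y := by
  classical
  by_contra hxy
  set L := lowPart G n (A ∪ C)
  have hxQ : x ∈ A ∪ C := mem_union_left C hx
  have hyQ : y ∈ A ∪ C := mem_union_right A hy
  have hne : x ≠ y := disjoint_iff_ne.1 h.disjoint x hx y hy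
  have hxL : x ∉ L := fun hxL ↦ hxy (h.adj_of_mem_lowPart hxL hyQ hne)
  have hyL : y ∉ L := fun hyL ↦ hxy (h.adj_of_mem_lowPart hyL hxQ hne.symm).symm
  obtain ⟨c, hc⟩ := hG.colorableOn_of_ssubset (s := (A ∪ C)ᶜ) <|
    ssubset_univ_iff.2 fun huniv ↦ mem_compl.1 (huniv ▸ mem_univ x) hxQ
  obtain ⟨c₁, hc₁, hc₁_eq⟩ := hc.exists_apply_eq hxy <| by
    have := h.degreeIn_compl_le hdeg hbound hx
    have := h.symm.degreeIn_compl_le hdeg hbound hy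
    rw [union_comm] at this
    omega
  set U := insert x (insert y (A ∪ C)ᶜ)
  have hUL : U ⊆ Lᶜ := insert_subset (by simpa) <| insert_subset (by simpa) <|
    compl_subset_compl.2 (filter_subset ..)
  obtain ⟨c₂, hc₂, hc₂_eq⟩ := hc₁.exists_extend (S := Lᶜ \ U) fun T hT ⟨v, hv⟩ ↦ by
    obtain ⟨hvL, hvU⟩ := mem_sdiff.1 (hT hv)
    simp only [U, mem_insert, mem_compl, not_or, not_not] at hvU
    have hL : degreeIn G L v = #L := degreeIn_eq_card fun u hu ↦
      (h.adj_of_mem_lowPart hu hvU.2.2 (ne_of_mem_of_not_mem hu (mem_compl.1 hvL))).symm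
    refine ⟨v, hv, (degreeIn_mono (union_subset hUL (hT.trans sdiff_subset)) v).trans_lt ?_⟩
    have := degreeIn_compl_add (G := G) L v
    have hL_card : 4 ≤ #L := h.four_le_card_lowPart hbound hw
    have := hdeg v
    omega
  rw [union_sdiff_of_subset hUL] at hc₂
  refine hG.prop ?_
  rw [← union_compl L, union_comm]
  exact hc₂.colorableOn_union_of_eq (x := x) (y := y) (by simpa) (by simpa) hne
    (by rw [hc₂_eq x (by simp [U]), hc₂_eq y (by simp [U]), hc₁_eq]) disjoint_compl_left
    (fun v hv ↦ ⟨h.adj_of_mem_lowPart hv hxQ (ne_of_mem_of_not_mem hv hxL),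
      h.adj_of_mem_lowPart hv hyQ (ne_of_mem_of_not_mem hv hyL)⟩)
    fun v hv ↦ (degreeIn_mono (subset_univ _) v).trans (mem_lowPart.1 hv).2

theorem isClique_union (hG : IsCriticalOn G univ n) (hw : 2 * w + 3 ≤ n) :
    G.IsClique (A ∪ C : Finset V) := by
  intro u hu v hv huv
  have hadj {a c : V} : a ∈ A → c ∈ C → G.Adj a c := h.adj_of_isCriticalOn hdeg hbound hG hw
  rcases mem_union.1 hu with hu | hu <;> rcases mem_union.1 hv with hv | hv
  · exact h.isClique_left hu hv huv
  · exact hadj hu hv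
  · exact (hadj hv hu).symm
  · exact h.isClique_right hu hv huv

end IsCliquePair

theorem IsCriticalOn.eq_top_of_highCliqueBound (hG : IsCriticalOn G univ n) (hn : 4 ≤ n)
    (hdeg : ∀ v, degreeIn G univ v ≤ n + 1) (hbound : HighCliqueBound G n w)
    (hw : 2 * w + 3 ≤ n) : G = ⊤ := by
  classical
  let r : Bool → ℕ := fun i ↦ if i then n / 2 else n - n / 2
  have hr (i : Bool) : 2 ≤ r i ∧ w < r i := by cases i <;> simp [r] <;> omega
  have hrn : r true + r false = n := by simp [r]; omega
  obtain ⟨A, C, hAC⟩ := exists_isCliquePair (r := r) (by rwa [hrn]) (fun i ↦ (hr i).1)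
    (by rw [hrn]; exact hG.prop) fun i A hA hA_deg ↦
      hrn.symm ▸ hbound.hasLowEdge hA (hr i).1 hA_deg (hr i).2
  rw [hrn] at hAC
  have hclique := hAC.isClique_union hdeg hbound hG hw
  have hcard : n < #(A ∪ C) := by
    rw [card_union_of_disjoint hAC.disjoint, hAC.card_add_card]
    exact n.lt_succ_self
  rw [hG.eq_of_isClique (subset_univ _) hclique hcard, coe_univ] at hclique
  exact isClique_univ.1 hclique

theorem isCriticalOn_univ_of_chromaticNumber_eq (hn : 0 < n)
    (hchi : G.chromaticNumber = (n + 1 : ℕ))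
    (hcrit : ∀ v : V, (G.induce ({v}ᶜ : Set V)).chromaticNumber < G.chromaticNumber) :
    IsCriticalOn G univ n := by
  classical
  refine minimal_iff_forall_lt.2 ⟨?_, fun s hs ↦ not_not.2 ?_⟩
  · rintro ⟨c, hc⟩
    let coloring : G.Coloring (Fin n) := .mk c fun {u v} ↦ hc (mem_univ u) (mem_univ v)
    have hle := coloring.colorable.chromaticNumber_le
    rw [hchi, Fintype.card_fin] at hle
    exact n.not_succ_le_self (Nat.cast_le.1 hle)
  · obtain ⟨v, -, hv⟩ := exists_of_ssubset hs
    obtain ⟨c⟩ := chromaticNumber_le_iff_colorable.1 <| Order.le_of_lt_add_one <|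
      (hcrit v).trans_eq (by rw [hchi]; norm_cast)
    refine ⟨fun u ↦ if hu : u = v then ⟨0, hn⟩ else c ⟨u, hu⟩, fun a ha b hb hab ↦ ?_⟩
    have hav : a ≠ v := ne_of_mem_of_not_mem ha hv
    have hbv : b ≠ v := ne_of_mem_of_not_mem hb hv
    simpa only [hav, hbv, dite_false] using c.valid (by simpa using hab)

theorem highCliqueBound_cliqueNum [DecidableRel G.Adj] (n : ℕ) :
    HighCliqueBound G n (G.induce {v | n + 1 ≤ G.degree v}).cliqueNum := by
  classical
  intro S hS hhigh
  have hclique : (G.induce {v | n + 1 ≤ G.degree v}).IsClique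
      (S.subtype (· ∈ {v | n + 1 ≤ G.degree v}) : Finset _) := fun a ha b hb hab ↦
    hS (mem_subtype.1 ha) (mem_subtype.1 hb) (Subtype.coe_ne_coe.2 hab)
  have := hclique.card_le_cliqueNum
  rwa [card_subtype, filter_true_of_mem fun v hv ↦ by
    simpa [degreeIn_univ] using Nat.succ_le_of_lt (hhigh v hv)] at this

end LowPart

end CriticalGraph

open CriticalGraph

/-- Theorem M: `K_{χ(G)}` is the only critical graph `G` with
`χ(G) ≥ Δ(G) ≥ 6` and `ω(𝓗(G)) ≤ ⌊Δ(G)/2⌋ - 2`, where `𝓗(G)` is the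
subgraph of `G` induced on the vertices of degree at least `χ(G)`. -/
theorem stmt_0 {V : Type*} [Fintype V] [DecidableEq V] (G : SimpleGraph V)
    [DecidableRel G.Adj] (k : ℕ)
    (hk : G.chromaticNumber = k)
    (hcrit : ∀ v : V, (G.induce ({v}ᶜ : Set V)).chromaticNumber < G.chromaticNumber)
    (hχΔ : G.maxDegree ≤ k) (hΔ : 6 ≤ G.maxDegree)
    (hω : (G.induce {v : V | k ≤ G.degree v}).cliqueNum ≤ G.maxDegree / 2 - 2) :
    Nonempty (G ≃g (⊤ : SimpleGraph (Fin k))) := by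
  obtain ⟨n, rfl⟩ : ∃ n, k = n + 1 := ⟨k - 1, by omega⟩
  have hG : IsCriticalOn G Finset.univ n :=
    isCriticalOn_univ_of_chromaticNumber_eq (by omega) hk hcrit
  have hdeg (v : V) : degreeIn G Finset.univ v ≤ n + 1 := by
    rw [degreeIn_univ]
    exact (G.degree_le_maxDegree v).trans hχΔ
  have htop : G = ⊤ :=
    hG.eq_top_of_highCliqueBound (by omega) hdeg (highCliqueBound_cliqueNum n) (by omega)
  have hcard : Fintype.card V = n + 1 := by
    rw [htop, chromaticNumber_top] at hk
    exact_mod_cast hk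
  rw [htop]
  exact ⟨Iso.completeGraph (Fintype.equivFinOfCardEq hcard)⟩
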